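/- arXiv:math-ph/0410029 — 4 statements merged into one kernel-verified Lean document; each statement's English description precedes it below -/
import Mathlib

section
/- For all integers N and M, every n ≥ 1, and every smooth function F : U_n → ℝ, one has 𝓛_N(𝓛_M F) − 𝓛_M(𝓛_N F) = (N−M)·𝓛_{N+M} F on U_n; that is, the operators 𝓛_N satisfy the commutation relations of the Witt algebra. -/
noncomputable section

/-- The open set `U_n = {x ∈ ℝⁿ : x_j ≠ 0 for all j}`. -/
def Uset (n : ℕ) : Set (Fin n → ℝ) := {x | ∀ j, x j ≠ 0}

/-- The differential operator `𝓛_N` acting on functions of `n` real variables: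
`(𝓛_N F)(x) = ∑_{j=1}^n ( -x_j^{1+N} ∂F/∂x_j(x) - 2(N+1) x_j^N F(x) )`. -/
def Lop (N : ℤ) (n : ℕ) (F : (Fin n → ℝ) → ℝ) (x : Fin n → ℝ) : ℝ :=
  ∑ j : Fin n,
    (-(x j) ^ ((1 : ℤ) + N) * fderiv ℝ F x (Pi.single j 1)
      - 2 * ((N : ℝ) + 1) * (x j) ^ N * F x)

/-!
Up to the weight `2`, the zeroth-order coefficient of `𝓛_N` is the divergence of its vector field
`v_N = -∑ x_j ^ (1 + N) ∂_j`, so `𝓛_N` is the Lie derivative along `v_N` on densities of weight `2`.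
The commutator of two first-order operators `V + a` and `W + b` is `[V, W] + (V b - W a)`, the
second-order terms cancelling by symmetry of second derivatives. It remains to compute
`[v_N, v_M] = (N - M) v_{N+M}` and `v_N (div v_M) - v_M (div v_N) = (N - M) div v_{N+M}`.
-/

open VectorField

section FirstOrderOp

variable {𝕜 E G : Type*} [NontriviallyNormedField 𝕜] [NormedAddCommGroup E] [NormedSpace 𝕜 E]
  [NormedAddCommGroup G] [NormedSpace 𝕜 G]

/-- The first-order linear differential operator `F ↦ V F + a F` with vector field `V` and
zeroth-order coefficient `a`. -/
def firstOrderOp (V : E → E) (a : E → 𝕜) (F : E → G) (x : E) : G :=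
  fderiv 𝕜 F x (V x) + a x • F x

variable {V W : E → E} {a b : E → 𝕜} {F : E → G} {x : E}

theorem firstOrderOp_firstOrderOp (hF : ContDiffAt 𝕜 2 F x) (hW : DifferentiableAt 𝕜 W x)
    (hb : DifferentiableAt 𝕜 b x) :
    firstOrderOp V a (firstOrderOp W b F) x =
      fderiv 𝕜 (fun y ↦ fderiv 𝕜 F y (W y)) x (V x) + fderiv 𝕜 b x (V x) • F x
        + b x • fderiv 𝕜 F x (V x) + a x • fderiv 𝕜 F x (W x) + (a x * b x) • F x := by
  have hF₁ : DifferentiableAt 𝕜 F x := hF.differentiableAt two_ne_zero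
  have hF₂ : DifferentiableAt 𝕜 (fderiv 𝕜 F) x :=
    (hF.fderiv_right (m := 1) one_add_one_eq_two.le).differentiableAt one_ne_zero
  have h_fderiv : fderiv 𝕜 (firstOrderOp W b F) x =
      fderiv 𝕜 (fun y ↦ fderiv 𝕜 F y (W y)) x +
        (b x • fderiv 𝕜 F x + (fderiv 𝕜 b x).smulRight (F x)) := by
    rw [← fderiv_fun_smul hb hF₁]
    exact fderiv_fun_add (hF₂.clm_apply hW) (hb.smul hF₁)
  rw [firstOrderOp, h_fderiv, firstOrderOp]
  simp only [add_apply, smul_apply, ContinuousLinearMap.smulRight_apply]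
  module

theorem firstOrderOp_commutator {r : WithTop ℕ∞} (hF : ContDiffAt 𝕜 r F x)
    (hr : minSmoothness 𝕜 2 ≤ r) (hV : DifferentiableAt 𝕜 V x) (hW : DifferentiableAt 𝕜 W x)
    (ha : DifferentiableAt 𝕜 a x) (hb : DifferentiableAt 𝕜 b x) :
    firstOrderOp V a (firstOrderOp W b F) x - firstOrderOp W b (firstOrderOp V a F) x =
      firstOrderOp (lieBracket 𝕜 V W) (fun y ↦ fderiv 𝕜 b y (V y) - fderiv 𝕜 a y (W y)) F x := by
  have hF₂ : ContDiffAt 𝕜 2 F x := hF.of_le (le_minSmoothness.trans hr)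
  rw [firstOrderOp_firstOrderOp hF₂ hW hb, firstOrderOp_firstOrderOp hF₂ hV ha, firstOrderOp,
    fderiv_apply_lieBracket hF hr hW hV]
  module

end FirstOrderOp

section Witt

variable {𝕜 ι G : Type*} [NontriviallyNormedField 𝕜]
  [NormedAddCommGroup G] [NormedSpace 𝕜 G]

/-- The vector field `v_N = -∑ x_j ^ (1 + N) ∂_j` on `𝕜^ι`. -/
def wittField (N : ℤ) (x : ι → 𝕜) : ι → 𝕜 := fun j ↦ -x j ^ (1 + N)

variable {x : ι → 𝕜}

theorem hasFDerivAt_apply_zpow [Finite ι] {j : ι} (hx : x j ≠ 0) (m : ℤ) :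
    HasFDerivAt (fun y : ι → 𝕜 ↦ y j ^ m)
      (((m : 𝕜) * x j ^ (m - 1)) • ContinuousLinearMap.proj (R := 𝕜) (φ := fun _ : ι ↦ 𝕜) j) x :=
  have := Fintype.ofFinite ι
  (hasDerivAt_zpow m (x j) (.inl hx)).comp_hasFDerivAt x (hasFDerivAt_apply j x)

theorem hasFDerivAt_wittField [Finite ι] (hx : ∀ j, x j ≠ 0) (N : ℤ) :
    HasFDerivAt (wittField N) (ContinuousLinearMap.pi fun j ↦
      -((((N : 𝕜) + 1) * x j ^ N) •
        ContinuousLinearMap.proj (R := 𝕜) (φ := fun _ : ι ↦ 𝕜) j)) x := by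
  have := Fintype.ofFinite ι
  refine hasFDerivAt_pi.2 fun j ↦ ?_
  simpa [wittField, add_comm] using (hasFDerivAt_apply_zpow (hx j) (1 + N)).fun_neg

theorem fderiv_wittField_wittField [Finite ι] (hx : ∀ j, x j ≠ 0) (N M : ℤ) :
    fderiv 𝕜 (wittField M) x (wittField N x) = -((M : 𝕜) + 1) • wittField (N + M) x := by
  ext j
  have h_zpow : x j ^ (1 + (N + M)) = x j ^ M * x j ^ (1 + N) := by
    rw [← zpow_add₀ (hx j)]
    ring_nf
  rw [(hasFDerivAt_wittField hx M).fderiv]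
  simp only [wittField, h_zpow, ContinuousLinearMap.pi_apply, neg_apply, smul_apply,
    ContinuousLinearMap.proj_apply, Pi.smul_apply, smul_eq_mul]
  ring

variable [Fintype ι]

theorem lieBracket_wittField (hx : ∀ j, x j ≠ 0) (N M : ℤ) :
    lieBracket 𝕜 (wittField N) (wittField M) x = ((N : 𝕜) - M) • wittField (N + M) x := by
  rw [lieBracket, fderiv_wittField_wittField hx, fderiv_wittField_wittField hx, add_comm M N]
  module

/-- The divergence `-(N + 1) ∑ x_j ^ N` of `wittField N`, given by its formula at every point,
including those with a vanishing coordinate, where `wittField N` need not be differentiable. -/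
def wittDiv (N : ℤ) (x : ι → 𝕜) : 𝕜 := -((N : 𝕜) + 1) * ∑ j, x j ^ N

theorem hasFDerivAt_wittDiv (hx : ∀ j, x j ≠ 0) (N : ℤ) :
    HasFDerivAt (wittDiv N) (-((N : 𝕜) + 1) • ∑ j, ((N : 𝕜) * x j ^ (N - 1)) •
      ContinuousLinearMap.proj (R := 𝕜) (φ := fun _ : ι ↦ 𝕜) j) x :=
  (HasFDerivAt.fun_sum fun j _ ↦ hasFDerivAt_apply_zpow (hx j) N).const_mul _

theorem fderiv_wittDiv_wittField (hx : ∀ j, x j ≠ 0) (N M : ℤ) :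
    fderiv 𝕜 (wittDiv M) x (wittField N x) = (M : 𝕜) * (M + 1) * ∑ j, x j ^ (N + M) := by
  have h_zpow (j : ι) : x j ^ (N + M) = x j ^ (M - 1) * x j ^ (1 + N) := by
    rw [← zpow_add₀ (hx j)]
    ring_nf
  rw [(hasFDerivAt_wittDiv hx M).fderiv]
  simp only [wittField, h_zpow, Finset.mul_sum, smul_apply, sum_apply,
    ContinuousLinearMap.proj_apply, smul_eq_mul]
  exact Finset.sum_congr rfl fun j _ ↦ by ring

theorem fderiv_wittDiv_sub_fderiv_wittDiv (hx : ∀ j, x j ≠ 0) (N M : ℤ) :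
    fderiv 𝕜 (wittDiv M) x (wittField N x) - fderiv 𝕜 (wittDiv N) x (wittField M x) =
      ((N : 𝕜) - M) * wittDiv (N + M) x := by
  rw [fderiv_wittDiv_wittField hx, fderiv_wittDiv_wittField hx, add_comm M N, wittDiv]
  push_cast
  ring

/-- The Lie derivative along `wittField N` on densities of weight `w`. -/
def wittOp (w : 𝕜) (N : ℤ) (F : (ι → 𝕜) → G) : (ι → 𝕜) → G :=
  firstOrderOp (wittField N) (fun x ↦ w * wittDiv N x) F

theorem Lop_witt_commutator_general {r : WithTop ℕ∞} {F : (ι → 𝕜) → G} (hF : ContDiffAt 𝕜 r F x)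
    (hr : minSmoothness 𝕜 2 ≤ r) (hx : ∀ j, x j ≠ 0) (w : 𝕜) (N M : ℤ) :
    wittOp w N (wittOp w M F) x - wittOp w M (wittOp w N F) x =
      ((N : 𝕜) - M) • wittOp w (N + M) F x := by
  have hV (K : ℤ) : DifferentiableAt 𝕜 (wittField K) x :=
    (hasFDerivAt_wittField hx K).differentiableAt
  have hdiv (K : ℤ) : DifferentiableAt 𝕜 (wittDiv K) x :=
    (hasFDerivAt_wittDiv hx K).differentiableAt
  have hcoeff (K : ℤ) : fderiv 𝕜 (fun y ↦ w * wittDiv K y) x = w • fderiv 𝕜 (wittDiv K) x :=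
    fderiv_const_mul (hdiv K) w
  simp only [wittOp]
  rw [firstOrderOp_commutator hF hr (hV N) (hV M) ((hdiv N).const_mul w) ((hdiv M).const_mul w)]
  simp only [firstOrderOp, hcoeff, smul_apply, smul_eq_mul, ← mul_sub,
    lieBracket_wittField hx, fderiv_wittDiv_sub_fderiv_wittDiv hx, map_smul]
  module

end Witt

theorem isOpen_Uset (n : ℕ) : IsOpen (Uset n) := by
  simpa [Uset, Set.pi] using
    isOpen_set_pi (Set.finite_univ (α := Fin n)) fun _ _ ↦ isOpen_compl_singleton (x := (0 : ℝ))

theorem Lop_eq_wittOp (N : ℤ) (n : ℕ) (F : (Fin n → ℝ) → ℝ) : Lop N n F = wittOp 2 N F := by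
  ext x
  have h_fderiv : fderiv ℝ F x (wittField N x) =
      ∑ j, -x j ^ (1 + N) * fderiv ℝ F x (Pi.single j 1) := by
    conv_lhs => rw [← Finset.univ_sum_single (wittField N x), map_sum]
    refine Finset.sum_congr rfl fun j _ ↦ ?_
    rw [← smul_eq_mul, ← map_smul, ← Pi.single_smul, smul_eq_mul, mul_one, wittField]
  rw [wittOp, firstOrderOp, h_fderiv, Lop, Finset.sum_sub_distrib, wittDiv, smul_eq_mul]
  simp only [← Finset.sum_mul, ← Finset.mul_sum]
  ring

/-- For all integers `N`, `M`, every `n ≥ 1` and every smooth function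
`F : U_n → ℝ`, one has `𝓛_N (𝓛_M F) - 𝓛_M (𝓛_N F) = (N - M) · 𝓛_{N+M} F` on `U_n`:
the operators `𝓛_N` satisfy the commutation relations of the Witt algebra. -/
theorem Lop_witt_commutator (N M : ℤ) (n : ℕ) (hn : 1 ≤ n) (F : (Fin n → ℝ) → ℝ)
    (hF : ContDiffOn ℝ (⊤ : ℕ∞) F (Uset n)) :
    ∀ x ∈ Uset n,
      Lop N n (Lop M n F) x - Lop M n (Lop N n F) x
        = ((N : ℝ) - (M : ℝ)) * Lop (N + M) n F x := by
  intro x hx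
  have hF₂ : ContDiffAt ℝ 2 F x :=
    (hF.contDiffAt ((isOpen_Uset n).mem_nhds hx)).of_le (WithTop.coe_le_coe.2 le_top)
  simpa only [Lop_eq_wittOp, smul_eq_mul] using Lop_witt_commutator_general hF₂ (by simp) hx 2 N M
end
end

section
/- Let α ∈ ℝ, n ≥ 0, and let x_1,…,x_n be pairwise distinct nonzero real numbers. Then for every real x with 0 < |x| < min_j |x_j|, the series Σ_{N=1}^∞ x^{N−2}·(𝓛_{−N} B_n^{(α)})(x_1,…,x_n) converges absolutely, and B_{n+1}^{(α)}(x, x_1,…,x_n) = (α/x²)·B_n^{(α)}(x_1,…,x_n) + Σ_{N=1}^∞ x^{N−2}·(𝓛_{−N} B_n^{(α)})(x_1,…,x_n) (the boundary Ward identity in operator form). -/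
noncomputable section

/-- The functions `B_n^{(α)}` defined by the Ward-identity recursion
`B_0^{(α)} = 1` and
`B_{n+1}^{(α)}(x, x_1, …, x_n) = (α/x²)·B_n^{(α)}(x_1,…,x_n)
  - ∑_{j=1}^n [ (1/(x_j - x) + 1/x)·∂B_n^{(α)}/∂x_j - (2/(x_j - x)²)·B_n^{(α)} ]`,
the new variable `x` being inserted as the first argument. -/
def Bfn (α : ℝ) : (n : ℕ) → (Fin n → ℝ) → ℝ
  | 0, _ => 1
  | n + 1, y =>
      α / (y 0) ^ 2 * Bfn α n (y ∘ Fin.succ)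
        - ∑ j : Fin n,
            ((1 / (y j.succ - y 0) + 1 / y 0)
                  * fderiv ℝ (Bfn α n) (y ∘ Fin.succ) (Pi.single j 1)
              - 2 / (y j.succ - y 0) ^ 2 * Bfn α n (y ∘ Fin.succ))

/-!
For `|x| < |a|` the Cauchy kernel and its derivative expand as
`1 / (a - x) = ∑ x ^ k / a ^ (k + 1)` and `1 / (a - x) ^ 2 = ∑ (k + 1) x ^ k / a ^ (k + 2)`.
Take `a = x_j`, multiply by `-∂F/∂x_j` and by `2 F` respectively, and sum over `j`: the coefficient
of `x ^ k` is `𝓛_{-(k+2)} F`. The remaining mode `𝓛_{-1} F = -∑ ∂F/∂x_j` supplies the `1 / x` part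
of the recursion.
-/

section CauchyKernel

variable {𝕜 : Type*} [NormedField 𝕜] {x a : 𝕜}

theorem hasSum_choose_mul_pow_div_pow (m : ℕ) (h : ‖x‖ < ‖a‖) :
    HasSum (fun k : ℕ => ((k + m).choose m : 𝕜) * (x ^ k / a ^ (k + m + 1)))
      (1 / (a - x) ^ (m + 1)) := by
  have norm_a_pos : 0 < ‖a‖ := (norm_nonneg x).trans_lt h
  have ha : a ≠ 0 := norm_pos_iff.mp norm_a_pos
  have ratio_lt_one : ‖x / a‖ < 1 := by rwa [norm_div, div_lt_one norm_a_pos]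
  convert (hasSum_choose_mul_geometric_of_norm_lt_one m ratio_lt_one).div_const (a ^ (m + 1))
    using 1
  · funext k
    rw [div_pow, mul_div_assoc, div_div, ← pow_add, add_assoc]
  · rw [div_div, ← mul_pow, sub_mul, one_mul, div_mul_cancel₀ x ha]

theorem hasSum_pow_div_pow_succ (h : ‖x‖ < ‖a‖) :
    HasSum (fun k : ℕ => x ^ k / a ^ (k + 1)) (1 / (a - x)) := by
  simpa using hasSum_choose_mul_pow_div_pow 0 h

theorem hasSum_succ_mul_pow_div_pow_add_two (h : ‖x‖ < ‖a‖) :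
    HasSum (fun k : ℕ => ((k : 𝕜) + 1) * (x ^ k / a ^ (k + 2))) (1 / (a - x) ^ 2) := by
  simpa using hasSum_choose_mul_pow_div_pow 1 h

end CauchyKernel

section WardSeries

variable {n : ℕ} (F : (Fin n → ℝ) → ℝ) (xs : Fin n → ℝ)

theorem lop_neg_one : Lop (-1) n F xs = -∑ j, fderiv ℝ F xs (Pi.single j 1) := by
  simp [Lop]

theorem lop_neg_natCast_add_two (k : ℕ) :
    Lop (-((k : ℤ) + 2)) n F xs
      = ∑ j, (2 * ((k : ℝ) + 1) / xs j ^ (k + 2) * F xs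
          - 1 / xs j ^ (k + 1) * fderiv ℝ F xs (Pi.single j 1)) := by
  refine Finset.sum_congr rfl fun j _ => ?_
  have deriv_coeff : xs j ^ (1 + -((k : ℤ) + 2)) = 1 / xs j ^ (k + 1) := by
    rw [show 1 + -((k : ℤ) + 2) = -((k + 1 : ℕ) : ℤ) by push_cast; ring, zpow_neg, zpow_natCast,
      one_div]
  have weight_coeff : xs j ^ (-((k : ℤ) + 2)) = 1 / xs j ^ (k + 2) := by
    rw [show (k : ℤ) + 2 = ((k + 2 : ℕ) : ℤ) by push_cast; ring, zpow_neg, zpow_natCast, one_div]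
  rw [deriv_coeff, weight_coeff]
  push_cast
  ring

variable {xs} {x : ℝ}

theorem hasSum_pow_mul_lop_neg_natCast_add_two (hlt : ∀ j, |x| < |xs j|) :
    HasSum (fun k : ℕ => x ^ k * Lop (-((k : ℤ) + 2)) n F xs)
      (∑ j, (2 / (xs j - x) ^ 2 * F xs
        - 1 / (xs j - x) * fderiv ℝ F xs (Pi.single j 1))) := by
  simp_rw [lop_neg_natCast_add_two, Finset.mul_sum]
  refine hasSum_sum fun j _ => ?_
  have weight_part := (hasSum_succ_mul_pow_div_pow_add_two (hlt j)).mul_left (2 * F xs)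
  have deriv_part := (hasSum_pow_div_pow_succ (hlt j)).mul_right (fderiv ℝ F xs (Pi.single j 1))
  convert! weight_part.sub deriv_part using 1
  · funext k
    ring
  · ring

theorem hasSum_zpow_mul_lop_neg_natCast_add_one (hlt : ∀ j, |x| < |xs j|) :
    HasSum (fun k : ℕ => x ^ ((k : ℤ) + 1 - 2) * Lop (-((k : ℤ) + 1)) n F xs)
      (-∑ j, ((1 / (xs j - x) + 1 / x) * fderiv ℝ F xs (Pi.single j 1)
        - 2 / (xs j - x) ^ 2 * F xs)) := by
  rw [← hasSum_nat_add_iff' 1]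
  convert! hasSum_pow_mul_lop_neg_natCast_add_two F hlt using 1
  · funext k
    rw [show ((k + 1 : ℕ) : ℤ) + 1 - 2 = k by push_cast; ring, zpow_natCast,
      show ((k + 1 : ℕ) : ℤ) + 1 = k + 2 by push_cast; ring]
  · have first_term : x ^ (((0 : ℕ) : ℤ) + 1 - 2) * Lop (-(((0 : ℕ) : ℤ) + 1)) n F xs
        = -∑ j, 1 / x * fderiv ℝ F xs (Pi.single j 1) := by
      norm_num [lop_neg_one, Finset.mul_sum]
    rw [Finset.sum_range_one, first_term, neg_sub_neg, ← Finset.sum_sub_distrib]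
    exact Finset.sum_congr rfl fun j _ => by ring

end WardSeries

theorem bfn_succ_cons (α : ℝ) (n : ℕ) (x : ℝ) (xs : Fin n → ℝ) :
    Bfn α (n + 1) (Fin.cons x xs)
      = α / x ^ 2 * Bfn α n xs
        - ∑ j, ((1 / (xs j - x) + 1 / x) * fderiv ℝ (Bfn α n) xs (Pi.single j 1)
          - 2 / (xs j - x) ^ 2 * Bfn α n xs) :=
  rfl

/-- For pairwise distinct nonzero `x_1, …, x_n` and every real `x` with
`0 < |x| < min_j |x_j|`, the series `∑_{N=1}^∞ x^{N-2} (𝓛_{-N} B_n^{(α)})(x_1,…,x_n)`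
converges absolutely, and
`B_{n+1}^{(α)}(x, x_1, …, x_n) = (α/x²)·B_n^{(α)}(x_1,…,x_n)
  + ∑_{N=1}^∞ x^{N-2} (𝓛_{-N} B_n^{(α)})(x_1,…,x_n)`
(the boundary Ward identity in operator form).  Here the series is indexed by `N = k + 1`
for `k : ℕ`. -/
theorem ward_identity_operator_form (α : ℝ) (n : ℕ) (xs : Fin n → ℝ)
    (h0 : ∀ j, xs j ≠ 0) (hdist : Function.Injective xs)
    (x : ℝ) (hx : 0 < |x|) (hlt : ∀ j, |x| < |xs j|) :
    Summable (fun k : ℕ =>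
      |x ^ ((k : ℤ) + 1 - 2) * Lop (-((k : ℤ) + 1)) n (Bfn α n) xs|)
    ∧ Bfn α (n + 1) (Fin.cons x xs)
        = α / x ^ 2 * Bfn α n xs
          + ∑' k : ℕ, x ^ ((k : ℤ) + 1 - 2) * Lop (-((k : ℤ) + 1)) n (Bfn α n) xs := by
  have ward_series := hasSum_zpow_mul_lop_neg_natCast_add_one (Bfn α n) hlt
  refine ⟨ward_series.summable.abs, ?_⟩
  rw [bfn_succ_cons, ward_series.tsum_eq, sub_eq_add_neg]
end
end

section
/- For every p ≥ 1 and all pairwise distinct nonzero real numbers x_1,…,x_p, one has lim_{x→0} x²·T_{p+1}(x, x_1,…,x_p) = 2·T_p(x_1,…,x_p); equivalently, T_{p+1}(x, x_1,…,x_p) = 2 x^{−2}·T_p(x_1,…,x_p) + o(x^{−2}) as x → 0. -/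
noncomputable section

/-- The rational functions `T_p`, as functions of real variables:
`T_p(x_1,…,x_p) = ∑_s 1/( x_{s(1)}² (x_{s(2)}-x_{s(1)})² ⋯ (x_{s(p)}-x_{s(p-1)})² x_{s(p)}² )`,
summed over all permutations `s` of `{1,…,p}`, with `T_0 = 0` (so `T_1(x) = 1/x⁴`). -/
def Tfn : (p : ℕ) → (Fin p → ℝ) → ℝ
  | 0, _ => 0
  | m + 1, x =>
      ∑ s : Equiv.Perm (Fin (m + 1)),
        1 / ((x (s 0)) ^ 2 * (∏ i : Fin m, (x (s i.succ) - x (s i.castSucc)) ^ 2)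
              * (x (s (Fin.last m))) ^ 2)

/-!
Each ordering of `x, x₁, …, x_p` arises exactly once by inserting `x` at some position of an
ordering of `x₁, …, x_p`. Read a term as a path that starts and ends at `0`. If `x` is inserted
first or last, the denominator acquires the factor `x²` and, as `x → 0`, the cofactor tends to the
denominator of the path without `x`; if `x` is inserted elsewhere, the denominator has a nonzero
limit, so `x²` kills the term. The two ends account for the factor `2`.
-/

open Equiv Filter Topology

section PermInsertion

variable {n : ℕ} {α M : Type*}

/-- The permutation of `Fin (n + 1)` whose one-line notation is that of `e` with all values raised
by one and the value `0` inserted at position `k`; it encodes the insertion of a new variable,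
indexed by `0`, into an ordering of the old ones. -/
def permInsertZero (e : Perm (Fin n)) (k : Fin (n + 1)) : Perm (Fin (n + 1)) :=
  Perm.decomposeFin.symm (0, e) * k.cycleRange

theorem permInsertZero_symm_zero (e : Perm (Fin n)) (k : Fin (n + 1)) :
    (permInsertZero e k).symm 0 = k := by
  rw [symm_apply_eq, permInsertZero, Perm.mul_apply, Fin.cycleRange_self,
    Perm.decomposeFin_symm_apply_zero]

theorem permInsertZero_bijective :
    Function.Bijective fun q : Perm (Fin n) × Fin (n + 1) => permInsertZero q.1 q.2 := by
  rw [Fintype.bijective_iff_injective_and_card]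
  refine ⟨?_, by simp [Fintype.card_perm, Nat.factorial_succ, mul_comm]⟩
  rintro ⟨e, k⟩ ⟨e', k'⟩ (h : permInsertZero e k = permInsertZero e' k')
  obtain rfl : k = k' := by
    rw [← permInsertZero_symm_zero e k, h, permInsertZero_symm_zero]
  obtain rfl : e = e' :=
    congrArg Prod.snd (Perm.decomposeFin.symm.injective (mul_right_cancel h))
  rfl

theorem cons_comp_permInsertZero (a : α) (v : Fin n → α) (e : Perm (Fin n)) (k : Fin (n + 1)) :
    (Fin.cons a v : Fin (n + 1) → α) ∘ permInsertZero e k = k.insertNth a (v ∘ e) := by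
  have cons_comp_decomposeFin_symm :
      (Fin.cons a v : Fin (n + 1) → α) ∘ Perm.decomposeFin.symm (0, e) = Fin.cons a (v ∘ e) := by
    ext j
    cases j using Fin.cases <;> simp
  rw [permInsertZero, Perm.coe_mul, ← Function.comp_assoc, cons_comp_decomposeFin_symm,
    Fin.cons_comp_cycleRange]

theorem sum_perm_cons_comp [AddCommMonoid M] (f : (Fin (n + 1) → α) → M) (a : α) (v : Fin n → α) :
    ∑ s : Perm (Fin (n + 1)), f (Fin.cons a v ∘ s) =
      ∑ e : Perm (Fin n), ∑ k : Fin (n + 1), f (k.insertNth a (v ∘ e)) := by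
  rw [← Fintype.sum_prod_type', ← permInsertZero_bijective.sum_comp]
  simp only [cons_comp_permInsertZero]

end PermInsertion

section PathDenom

variable {K : Type*} {m : ℕ}

/-- The product of the squared step lengths of the path `0, y 0, …, y m, 0`, the denominator of a
single term of `T_{m+1}`. -/
def pathDenom [CommRing K] (y : Fin (m + 1) → K) : K :=
  y 0 ^ 2 * (∏ i : Fin m, (y i.succ - y i.castSucc) ^ 2) * y (Fin.last m) ^ 2

/-- The function `T_{m+1}` over an arbitrary field. -/
def pathSum [Field K] (x : Fin (m + 1) → K) : K :=
  ∑ s : Perm (Fin (m + 1)), 1 / pathDenom (x ∘ s)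

theorem Tfn_succ_eq_pathSum (x : Fin (m + 1) → ℝ) : Tfn (m + 1) x = pathSum x :=
  rfl

theorem pathSum_cons [Field K] (x : K) (xs : Fin (m + 1) → K) :
    pathSum (Fin.cons x xs : Fin (m + 2) → K) =
      ∑ e : Perm (Fin (m + 1)), ∑ k : Fin (m + 2), 1 / pathDenom (k.insertNth x (xs ∘ e)) :=
  sum_perm_cons_comp (fun y => 1 / pathDenom y) x xs

theorem pathDenom_comp_rev [CommRing K] (y : Fin (m + 1) → K) :
    pathDenom (y ∘ Fin.rev) = pathDenom y := by
  have prod_rev : ∏ i : Fin m, (y i.succ.rev - y i.castSucc.rev) ^ 2 =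
      ∏ i : Fin m, (y i.succ - y i.castSucc) ^ 2 := by
    rw [← Equiv.prod_comp Fin.revPerm]
    refine Finset.prod_congr rfl fun i _ => ?_
    rw [Fin.revPerm_apply, Fin.rev_succ, Fin.rev_castSucc, Fin.rev_rev, sub_sq_comm]
  simp only [pathDenom, Function.comp_apply, prod_rev, Fin.rev_zero, Fin.rev_last]
  ring

theorem pathDenom_cons [CommRing K] (x : K) (y : Fin (m + 1) → K) :
    pathDenom (Fin.cons x y : Fin (m + 2) → K) =
      x ^ 2 * ((y 0 - x) ^ 2 * (∏ i : Fin m, (y i.succ - y i.castSucc) ^ 2) *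
        y (Fin.last m) ^ 2) := by
  simp only [pathDenom, Fin.prod_univ_succ, Fin.castSucc_zero, Fin.castSucc_succ, ← Fin.succ_last,
    Fin.cons_zero, Fin.cons_succ]
  ring

theorem pathDenom_ne_zero_iff [CommRing K] [IsDomain K] {y : Fin (m + 1) → K} :
    pathDenom y ≠ 0 ↔
      y 0 ≠ 0 ∧ (∀ i : Fin m, y i.succ ≠ y i.castSucc) ∧ y (Fin.last m) ≠ 0 := by
  simp [pathDenom, Finset.prod_eq_zero_iff, sub_eq_zero, and_assoc]

theorem pathDenom_ne_zero_of_injective [CommRing K] [IsDomain K] {y : Fin (m + 1) → K}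
    (hy : Function.Injective y) (hfirst : y 0 ≠ 0) (hlast : y (Fin.last m) ≠ 0) :
    pathDenom y ≠ 0 :=
  pathDenom_ne_zero_iff.2 ⟨hfirst, fun i => hy.ne i.castSucc_lt_succ.ne', hlast⟩

theorem pathDenom_insertNth_zero_ne_zero [CommRing K] [IsDomain K] {y : Fin (m + 1) → K}
    (hy : Function.Injective y) (h0 : ∀ j, y j ≠ 0) (i : Fin m) :
    pathDenom (i.castSucc.succ.insertNth 0 y : Fin (m + 2) → K) ≠ 0 := by
  have cons_injective : Function.Injective (Fin.cons 0 y : Fin (m + 2) → K) :=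
    Fin.cons_injective_iff.2 ⟨fun ⟨j, hj⟩ => h0 j hj, hy⟩
  refine pathDenom_ne_zero_of_injective ?_ ?_ ?_
  · rw [← Fin.cons_comp_cycleRange]
    exact cons_injective.comp (Equiv.injective _)
  · rw [Fin.insertNth_apply_below (Fin.succ_pos _)]
    simpa using h0 _
  · rw [Fin.insertNth_apply_above (by simp [Fin.lt_def])]
    simpa using h0 _

end PathDenom

section Limits

variable {K : Type*} [TopologicalSpace K] {m : ℕ}

theorem continuous_pathDenom [CommRing K] [IsTopologicalRing K] :
    Continuous (pathDenom : (Fin (m + 1) → K) → K) := by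
  unfold pathDenom
  fun_prop

variable [Field K] [IsTopologicalDivisionRing K]

theorem tendsto_sq_mul_one_div_pathDenom_insertNth_first {y : Fin (m + 1) → K}
    (hy : pathDenom y ≠ 0) :
    Tendsto (fun x : K => x ^ 2 * (1 / pathDenom ((0 : Fin (m + 2)).insertNth x y)))
      (𝓝[≠] 0) (𝓝 (1 / pathDenom y)) := by
  let cofactor (x : K) : K :=
    (y 0 - x) ^ 2 * (∏ i : Fin m, (y i.succ - y i.castSucc) ^ 2) * y (Fin.last m) ^ 2
  have cofactor_zero : cofactor 0 = pathDenom y := by simp only [cofactor, sub_zero, pathDenom]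
  have cofactor_tendsto : Tendsto cofactor (𝓝 0) (𝓝 (pathDenom y)) :=
    cofactor_zero ▸ Continuous.tendsto (by fun_prop) 0
  refine ((tendsto_const_nhds.div cofactor_tendsto hy).mono_left nhdsWithin_le_nhds).congr' ?_
  filter_upwards [self_mem_nhdsWithin] with x (hx : x ≠ 0)
  rw [Fin.insertNth_zero', pathDenom_cons, ← div_div, mul_div_assoc',
    mul_one_div_cancel (pow_ne_zero 2 hx), Pi.div_apply]

theorem tendsto_sq_mul_one_div_pathDenom_insertNth_last {y : Fin (m + 1) → K}
    (hy : pathDenom y ≠ 0) :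
    Tendsto (fun x : K => x ^ 2 * (1 / pathDenom ((Fin.last (m + 1)).insertNth x y)))
      (𝓝[≠] 0) (𝓝 (1 / pathDenom y)) := by
  rw [← pathDenom_comp_rev] at hy
  have reversed := tendsto_sq_mul_one_div_pathDenom_insertNth_first hy
  simpa only [← Fin.rev_last, ← Fin.insertNth_comp_rev, pathDenom_comp_rev] using reversed

theorem tendsto_sq_mul_one_div_pathDenom_insertNth_of_ne_zero {y : Fin (m + 1) → K}
    {k : Fin (m + 2)} (hk : pathDenom (k.insertNth 0 y : Fin (m + 2) → K) ≠ 0) :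
    Tendsto (fun x : K => x ^ 2 * (1 / pathDenom (k.insertNth x y))) (𝓝 0) (𝓝 0) := by
  have pathDenom_tendsto : Tendsto (fun x : K => pathDenom (k.insertNth x y)) (𝓝 0)
      (𝓝 (pathDenom (k.insertNth 0 y))) :=
    (continuous_pathDenom.comp (continuous_id.finInsertNth k continuous_const)).tendsto 0
  have one_div_tendsto := (tendsto_const_nhds (x := (1 : K))).div pathDenom_tendsto hk
  simpa using ((continuous_pow 2).tendsto (0 : K)).mul one_div_tendsto

theorem tendsto_sum_sq_mul_one_div_pathDenom_insertNth {y : Fin (m + 1) → K}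
    (hy : Function.Injective y) (h0 : ∀ j, y j ≠ 0) :
    Tendsto (fun x : K => ∑ k : Fin (m + 2), x ^ 2 * (1 / pathDenom (k.insertNth x y)))
      (𝓝[≠] 0) (𝓝 (2 * (1 / pathDenom y))) := by
  have hden : pathDenom y ≠ 0 := pathDenom_ne_zero_of_injective hy (h0 _) (h0 _)
  have interior (i : Fin m) : Tendsto
      (fun x : K => x ^ 2 * (1 / pathDenom (i.castSucc.succ.insertNth x y))) (𝓝[≠] 0) (𝓝 0) :=
    (tendsto_sq_mul_one_div_pathDenom_insertNth_of_ne_zero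
      (pathDenom_insertNth_zero_ne_zero hy h0 i)).mono_left nhdsWithin_le_nhds
  have limit_eq : 2 * (1 / pathDenom y) =
      1 / pathDenom y + ((∑ _i : Fin m, 0) + 1 / pathDenom y) := by
    rw [Finset.sum_const_zero, zero_add, two_mul]
  simp only [Fin.sum_univ_succ (n := m + 1), Fin.sum_univ_castSucc (n := m), Fin.succ_last,
    limit_eq]
  exact (tendsto_sq_mul_one_div_pathDenom_insertNth_first hden).add
    ((tendsto_finsetSum _ fun i _ => interior i).add
      (tendsto_sq_mul_one_div_pathDenom_insertNth_last hden))

theorem T_leading_Laurent_coefficient_general (xs : Fin (m + 1) → K)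
    (h0 : ∀ j, xs j ≠ 0) (hdist : Function.Injective xs) :
    Tendsto (fun x : K => x ^ 2 * pathSum (Fin.cons x xs : Fin (m + 2) → K))
      (𝓝[≠] 0) (𝓝 (2 * pathSum xs)) := by
  simp only [pathSum_cons, Finset.mul_sum]
  rw [pathSum, Finset.mul_sum]
  exact tendsto_finsetSum _ fun e _ =>
    tendsto_sum_sq_mul_one_div_pathDenom_insertNth (hdist.comp e.injective) fun j => h0 (e j)

end Limits

/-- For every `p ≥ 1` and all pairwise distinct nonzero real numbers
`x_1, …, x_p`, one has `lim_{x→0} x² · T_{p+1}(x, x_1, …, x_p) = 2 · T_p(x_1, …, x_p)`;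
equivalently, `T_{p+1}(x, x_1, …, x_p) = 2 x^{-2} T_p(x_1,…,x_p) + o(x^{-2})` as `x → 0`. -/
theorem T_leading_Laurent_coefficient (p : ℕ) (hp : 1 ≤ p) (xs : Fin p → ℝ)
    (h0 : ∀ j, xs j ≠ 0) (hdist : Function.Injective xs) :
    Filter.Tendsto (fun x : ℝ => x ^ 2 * Tfn (p + 1) (Fin.cons x xs))
      (nhdsWithin 0 {x | x ≠ 0}) (nhds (2 * Tfn p xs)) := by
  obtain ⟨m, rfl⟩ := Nat.exists_eq_add_of_le' hp
  simp only [Tfn_succ_eq_pathSum]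
  exact T_leading_Laurent_coefficient_general xs h0 hdist
end
end

section
/- Let v ∈ V be a highest-weight vector of weight h with v ≠ 0 and L_{−1} v ≠ 0, let κ ∈ ℂ with κ ≠ 0, and set χ := ( (κ/2)·L_{−1}∘L_{−1} − 2·L_{−2} ) v. Then L_n χ = 0 for all integers n ≥ 1 if and only if h = (6−κ)/(2κ) and c = (3κ−8)(6−κ)/(2κ). -/
noncomputable section

/-!
Since `[L_n, L_1] = (n - 1) L_{n+1}`, the modes `L_1` and `L_2` generate all positive modes, so `χ`
is singular as soon as `L_1 χ = L_2 χ = 0`. Commuting `L_1` and `L_2` through to `v` gives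
`L_1 χ = (κ (2h + 1) - 6) L_{-1} v` and `L_2 χ = ((3κ - 8) h - c) v`, and the vanishing of the two
coefficients determines `h` and then `c`.
-/

section VirasoroRep

variable {K V : Type*} [Field K] [AddCommGroup V] [Module K V]

/-- The operators `L n` represent the Virasoro algebra on `V` with central charge `c`.
The cocycle `(m³ - m)/12` has its usual meaning only when `K` has characteristic not `2` or `3`. -/
def IsVirasoroRep (c : K) (L : ℤ → Module.End K V) : Prop :=
  ∀ m k : ℤ, ⁅L m, L k⁆ = ((m - k : ℤ) : K) • L (m + k) +
    (if m = -k then ((m ^ 3 - m : ℤ) : K) / 12 * c else 0) • 1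

/-- A singular vector: one annihilated by every positive mode. It may be zero. -/
def IsSingularVector (L : ℤ → Module.End K V) (w : V) : Prop :=
  ∀ n : ℤ, 1 ≤ n → L n w = 0

/-- A highest-weight vector of weight `h`: a singular eigenvector of `L 0`. It may be zero. -/
structure IsHighestWeightVector (L : ℤ → Module.End K V) (h : K) (v : V) : Prop where
  isSingularVector : IsSingularVector L v
  weight : L 0 v = h • v

/-- The level-two descendant `χ = ((κ/2) L₋₁² - 2 L₋₂) v` of `v`: the candidate singular vector. -/
def levelTwoDescendant (L : ℤ → Module.End K V) (κ : K) (v : V) : V :=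
  (κ / 2) • L (-1) (L (-1) v) - (2 : K) • L (-2) v

namespace IsVirasoroRep

variable {c h : K} {L : ℤ → Module.End K V} {v : V}

theorem apply_apply (hL : IsVirasoroRep c L) (m k : ℤ) (u : V) :
    L m (L k u) = L k (L m u) + (((m - k : ℤ) : K) • L (m + k) u +
      (if m = -k then ((m ^ 3 - m : ℤ) : K) / 12 * c else 0) • u) :=
  sub_eq_iff_eq_add'.mp (LinearMap.congr_fun (hL m k) u)

theorem apply_apply_of_ne_neg (hL : IsVirasoroRep c L) {m k : ℤ} (hmk : m ≠ -k) (u : V) :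
    L m (L k u) = L k (L m u) + ((m - k : ℤ) : K) • L (m + k) u := by
  simp [hL.apply_apply m k u, hmk]

theorem apply_apply_neg (hL : IsVirasoroRep c L) (m : ℤ) (u : V) :
    L m (L (-m) u) = L (-m) (L m u) + (((2 * m : ℤ) : K) • L 0 u +
      (((m ^ 3 - m : ℤ) : K) / 12 * c) • u) := by
  simp [hL.apply_apply m (-m) u, two_mul]

theorem zero_apply_apply (hL : IsVirasoroRep c L) (hv : L 0 v = h • v) (k : ℤ) :
    L 0 (L k v) = (h - k) • L k v := by
  have central_term : (if 0 = -k then ((0 ^ 3 - 0 : ℤ) : K) / 12 * c else 0) = 0 := by simp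
  rw [hL.apply_apply, hv, map_smul, central_term, zero_add]
  push_cast
  module

theorem isSingularVector_iff [CharZero K] (hL : IsVirasoroRep c L) {w : V} :
    IsSingularVector L w ↔ L 1 w = 0 ∧ L 2 w = 0 := by
  refine ⟨fun hw ↦ ⟨hw 1 le_rfl, hw 2 one_le_two⟩, fun ⟨hw₁, hw₂⟩ ↦ ?_⟩
  have apply_eq_zero_of_two_le (n : ℤ) (hn : 2 ≤ n) : L n w = 0 := by
    induction n, hn using Int.leInduction with
    | base => exact hw₂
    | succ n hn ih =>
      have sub_one_ne_zero : ((n - 1 : ℤ) : K) ≠ 0 := Int.cast_ne_zero.mpr (by lia)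
      have hcomm := hL.apply_apply_of_ne_neg (m := n) (k := 1) (by lia) w
      rw [hw₁, ih, map_zero, map_zero, zero_add] at hcomm
      exact (smul_eq_zero_iff_right sub_one_ne_zero).mp hcomm.symm
  intro n hn
  obtain rfl | hn := hn.eq_or_lt
  · exact hw₁
  · exact apply_eq_zero_of_two_le n hn

theorem one_apply_neg_one (hL : IsVirasoroRep c L) (hv : IsHighestWeightVector L h v) :
    L 1 (L (-1) v) = (2 * h) • v := by
  rw [hL.apply_apply_neg, hv.isSingularVector 1 le_rfl, map_zero, hv.weight]
  push_cast
  module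

theorem two_apply_neg_one (hL : IsVirasoroRep c L) (hv : IsSingularVector L v) :
    L 2 (L (-1) v) = 0 := by
  rw [hL.apply_apply_of_ne_neg (by decide), hv 2 one_le_two, hv (2 + -1) le_rfl]
  simp

theorem one_apply_neg_two (hL : IsVirasoroRep c L) (hv : IsSingularVector L v) :
    L 1 (L (-2) v) = (3 : K) • L (-1) v := by
  rw [hL.apply_apply_of_ne_neg (by decide), hv 1 le_rfl]
  norm_num

theorem two_apply_neg_two [CharZero K] (hL : IsVirasoroRep c L)
    (hv : IsHighestWeightVector L h v) :
    L 2 (L (-2) v) = (4 * h + c / 2) • v := by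
  rw [hL.apply_apply_neg, hv.isSingularVector 2 one_le_two, map_zero, hv.weight]
  push_cast
  module

theorem one_apply_neg_one_neg_one (hL : IsVirasoroRep c L) (hv : IsHighestWeightVector L h v) :
    L 1 (L (-1) (L (-1) v)) = (4 * h + 2) • L (-1) v := by
  rw [hL.apply_apply_neg, hL.one_apply_neg_one hv, hL.zero_apply_apply hv.weight, map_smul]
  push_cast
  module

theorem two_apply_neg_one_neg_one (hL : IsVirasoroRep c L) (hv : IsHighestWeightVector L h v) :
    L 2 (L (-1) (L (-1) v)) = (6 * h) • v := by
  rw [hL.apply_apply_of_ne_neg (by decide), hL.two_apply_neg_one hv.isSingularVector,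
    map_zero, show (2 + -1 : ℤ) = 1 from rfl, hL.one_apply_neg_one hv]
  push_cast
  module

theorem one_apply_levelTwoDescendant [CharZero K] (hL : IsVirasoroRep c L)
    (hv : IsHighestWeightVector L h v) (κ : K) :
    L 1 (levelTwoDescendant L κ v) = (κ * (2 * h + 1) - 6) • L (-1) v := by
  rw [levelTwoDescendant, map_sub, map_smul, map_smul, hL.one_apply_neg_one_neg_one hv,
    hL.one_apply_neg_two hv.isSingularVector]
  module

theorem two_apply_levelTwoDescendant [CharZero K] (hL : IsVirasoroRep c L)
    (hv : IsHighestWeightVector L h v) (κ : K) :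
    L 2 (levelTwoDescendant L κ v) = ((3 * κ - 8) * h - c) • v := by
  rw [levelTwoDescendant, map_sub, map_smul, map_smul, hL.two_apply_neg_one_neg_one hv,
    hL.two_apply_neg_two hv]
  module

end IsVirasoroRep

theorem virasoro_level_two_degeneracy_iff_general [CharZero K] {c h κ : K}
    {L : ℤ → Module.End K V} {v : V} (hL : IsVirasoroRep c L) (hv : IsHighestWeightVector L h v)
    (hv' : L (-1) v ≠ 0) (hκ : κ ≠ 0) :
    IsSingularVector L (levelTwoDescendant L κ v) ↔
      h = (6 - κ) / (2 * κ) ∧ c = (3 * κ - 8) * (6 - κ) / (2 * κ) := by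
  have hv_ne : v ≠ 0 := fun hv_zero ↦ hv' (by rw [hv_zero, map_zero])
  have weight_iff : κ * (2 * h + 1) - 6 = 0 ↔ h = (6 - κ) / (2 * κ) := by
    rw [eq_div_iff (mul_ne_zero two_ne_zero hκ)]
    grind
  rw [hL.isSingularVector_iff, hL.one_apply_levelTwoDescendant hv,
    hL.two_apply_levelTwoDescendant hv, smul_eq_zero_iff_left hv', smul_eq_zero_iff_left hv_ne,
    weight_iff]
  refine and_congr_right fun hh ↦ ?_
  rw [hh, mul_div_assoc, sub_eq_zero, eq_comm]

end VirasoroRep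

/-- Let `v ≠ 0` be a highest-weight vector of weight `h` with
`L₋₁ v ≠ 0`, let `κ ≠ 0`, and set `χ := ((κ/2) L₋₁ ∘ L₋₁ - 2 L₋₂) v`.  Then `L n χ = 0`
for all `n ≥ 1` if and only if `h = (6 - κ)/(2κ)` and `c = (3κ - 8)(6 - κ)/(2κ)`. -/
theorem virasoro_level_two_degeneracy_iff {V : Type*} [AddCommGroup V] [Module ℂ V]
    (c : ℂ) (L : ℤ → Module.End ℂ V)
    (hVir : ∀ m k : ℤ, ∀ u : V,
      L m (L k u) - L k (L m u)
        = ((m - k : ℤ) : ℂ) • L (m + k) u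
          + (if m = -k then ((m ^ 3 - m : ℤ) : ℂ) / 12 * c else 0) • u)
    (h κ : ℂ) (v : V)
    (hv1 : ∀ n : ℤ, 1 ≤ n → L n v = 0) (hv0 : L 0 v = h • v)
    (hv : v ≠ 0) (hv' : L (-1) v ≠ 0) (hκ : κ ≠ 0) :
    (∀ n : ℤ, 1 ≤ n →
        L n ((κ / 2) • L (-1) (L (-1) v) - (2 : ℂ) • L (-2) v) = 0)
      ↔ (h = (6 - κ) / (2 * κ) ∧ c = (3 * κ - 8) * (6 - κ) / (2 * κ)) := by
  have hL : IsVirasoroRep c L := fun m k ↦ LinearMap.ext fun u ↦ hVir m k u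
  exact virasoro_level_two_degeneracy_iff_general hL ⟨hv1, hv0⟩ hv' hκ
end
end
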